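/- On the bottom face F of the reference tetrahedron, the normal traces of the face basis functions form an L²(F)-orthogonal family: for all admissible index pairs (i,j) and (l,m) with i+j ≤ k and l+m ≤ k there exists a positive real c = c(i,j) such that ∫_F (φ_{ij} · n)(x,y,0) (φ_{lm} · n)(x,y,0) dx dy = c δ_{il} δ_{jm}, where the admissible index pairs are (0,0), the pairs (0,j) with j ≥ 1, and the pairs (i,j) with i ≥ 1, j ≥ 0, and n = (0,0,−1). -/

import Mathlib

open MeasureTheory

/-- Jacobi polynomial with parameters `(α, 0)`, via the Rodrigues formula. -/
noncomputable def jacobiP (α : ℝ) (n : ℕ) (x : ℝ) : ℝ :=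
  1 / (2 ^ n * (n.factorial : ℝ) * (1 - x) ^ α) *
    iteratedDeriv n (fun t : ℝ => (1 - t) ^ α * (t ^ 2 - 1) ^ n) x

/-- Integrated Jacobi polynomial `p̂_n^α`. -/
noncomputable def jacobiPhat (α : ℝ) (n : ℕ) (x : ℝ) : ℝ :=
  if n = 0 then 1 else ∫ ξ in (-1 : ℝ)..x, jacobiP α (n - 1) ξ

/-- Partial derivative in the first coordinate. -/
noncomputable def pdx (f : ℝ × ℝ × ℝ → ℝ) (p : ℝ × ℝ × ℝ) : ℝ :=
  deriv (fun x => f (x, p.2.1, p.2.2)) p.1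

/-- Partial derivative in the second coordinate. -/
noncomputable def pdy (f : ℝ × ℝ × ℝ → ℝ) (p : ℝ × ℝ × ℝ) : ℝ :=
  deriv (fun y => f (p.1, y, p.2.2)) p.2.1

/-- Partial derivative in the third coordinate. -/
noncomputable def pdz (f : ℝ × ℝ × ℝ → ℝ) (p : ℝ × ℝ × ℝ) : ℝ :=
  deriv (fun z => f (p.1, p.2.1, z)) p.2.2

/-- Gradient of a scalar field on `ℝ³`. -/
noncomputable def grad3 (f : ℝ × ℝ × ℝ → ℝ) (p : ℝ × ℝ × ℝ) : ℝ × ℝ × ℝ :=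
  (pdx f p, pdy f p, pdz f p)

/-- Curl of a vector field on `ℝ³`. -/
noncomputable def curl3 (v : ℝ × ℝ × ℝ → ℝ × ℝ × ℝ) (p : ℝ × ℝ × ℝ) : ℝ × ℝ × ℝ :=
  (pdy (fun q => (v q).2.2) p - pdz (fun q => (v q).2.1) p,
   pdz (fun q => (v q).1) p - pdx (fun q => (v q).2.2) p,
   pdx (fun q => (v q).2.1) p - pdy (fun q => (v q).1) p)

/-- Cross product on `ℝ³`. -/
noncomputable def cross3 (a b : ℝ × ℝ × ℝ) : ℝ × ℝ × ℝ :=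
  (a.2.1 * b.2.2 - a.2.2 * b.2.1, a.2.2 * b.1 - a.1 * b.2.2, a.1 * b.2.1 - a.2.1 * b.1)

/-- Euclidean dot product on `ℝ³`. -/
noncomputable def dot3 (a b : ℝ × ℝ × ℝ) : ℝ :=
  a.1 * b.1 + a.2.1 * b.2.1 + a.2.2 * b.2.2

/-- Barycentric coordinate `λ₁ = (1 - x - y - z)/2` on the reference tetrahedron. -/
noncomputable def lam1 (p : ℝ × ℝ × ℝ) : ℝ := (1 - p.1 - p.2.1 - p.2.2) / 2

/-- Barycentric coordinate `λ₂ = (1 + x - y - z)/2` on the reference tetrahedron. -/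
noncomputable def lam2 (p : ℝ × ℝ × ℝ) : ℝ := (1 + p.1 - p.2.1 - p.2.2) / 2

/-- Barycentric coordinate `λ₃ = y` on the reference tetrahedron. -/
noncomputable def lam3 (p : ℝ × ℝ × ℝ) : ℝ := p.2.1

/-- The lowest-order Nédélec field `N₀ = (1/2)(y+z-1, -x, -x)` for the edge from
`(-1,0,0)` to `(1,0,0)`. -/
noncomputable def nedelec0 (p : ℝ × ℝ × ℝ) : ℝ × ℝ × ℝ :=
  ((p.2.1 + p.2.2 - 1) / 2, -p.1 / 2, -p.1 / 2)

/-- The scalar field `u_i(x,y,z) = p̂_i^0(x/(1-y-z)) (1-y-z)^i`. -/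
noncomputable def uFun (i : ℕ) (p : ℝ × ℝ × ℝ) : ℝ :=
  jacobiPhat 0 i (p.1 / (1 - p.2.1 - p.2.2)) * (1 - p.2.1 - p.2.2) ^ i

/-- The scalar field `v_{ij}(x,y,z) = p̂_j^{2i-1}((2y+z-1)/(1-z)) (1-z)^j`. -/
noncomputable def vFun (i j : ℕ) (p : ℝ × ℝ × ℝ) : ℝ :=
  jacobiPhat (2 * (i : ℝ) - 1) j ((2 * p.2.1 + p.2.2 - 1) / (1 - p.2.2)) * (1 - p.2.2) ^ j

/-- The face basis functions for the bottom face of the reference tetrahedron: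
`φ_{00}` is the lowest-order Raviart–Thomas face function,
`φ_{0j} = ∇ × (N₀ v_{2j})` for `j ≥ 1`, and
`φ_{ij} = -∇u_{i+1} × ∇v_{(i+1)(j+1)}` for `i ≥ 1, j ≥ 0`. -/
noncomputable def phiAll : ℕ → ℕ → ℝ × ℝ × ℝ → ℝ × ℝ × ℝ
  | 0, 0 => fun p =>
      lam1 p • cross3 (grad3 lam2 p) (grad3 lam3 p)
        + lam2 p • cross3 (grad3 lam3 p) (grad3 lam1 p)
        + lam3 p • cross3 (grad3 lam1 p) (grad3 lam2 p)
  | 0, (j + 1) => curl3 fun q => vFun 2 (j + 1) q • nedelec0 q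
  | (i + 1), j => fun p =>
      -cross3 (grad3 (uFun (i + 2)) p) (grad3 (vFun (i + 2) (j + 1)) p)

/-- The bottom face of the reference tetrahedron, parametrized by `(x,y) ↦ (x,y,0)`. -/
def bottomFace : Set (ℝ × ℝ) := {p | 0 ≤ p.2 ∧ p.2 ≤ 1 ∧ |p.1| ≤ 1 - p.2}

open Polynomial

/-- The integral over `[-1,1]` of a polynomial. -/
noncomputable def polyInt (p : ℝ[X]) : ℝ := ∫ t in (-1 : ℝ)..1, p.eval t

lemma polyInt_intervalIntegrable (p : ℝ[X]) (a b : ℝ) :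
    IntervalIntegrable (fun t => p.eval t) volume a b :=
  p.continuous.intervalIntegrable a b

lemma polyInt_add (p q : ℝ[X]) : polyInt (p + q) = polyInt p + polyInt q := by
  simp only [polyInt, eval_add]
  exact intervalIntegral.integral_add (polyInt_intervalIntegrable p _ _)
    (polyInt_intervalIntegrable q _ _)

lemma polyInt_sub (p q : ℝ[X]) : polyInt (p - q) = polyInt p - polyInt q := by
  simp only [polyInt, eval_sub]
  exact intervalIntegral.integral_sub (polyInt_intervalIntegrable p _ _)
    (polyInt_intervalIntegrable q _ _)

lemma polyInt_C_mul (c : ℝ) (q : ℝ[X]) : polyInt (C c * q) = c * polyInt q := by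
  simp only [polyInt, eval_mul, eval_C]
  exact intervalIntegral.integral_const_mul _ _

lemma polyInt_derivative (p : ℝ[X]) : polyInt (derivative p) = p.eval 1 - p.eval (-1) := by
  unfold polyInt
  exact intervalIntegral.integral_eq_sub_of_hasDerivAt (fun x _ => p.hasDerivAt x)
    (polyInt_intervalIntegrable _ _ _)

lemma polyInt_sq_pos (a : ℕ) (p : ℝ[X]) (hp : p ≠ 0) : 0 < polyInt ((1 - X) ^ a * (p * p)) := by
  unfold polyInt
  refine intervalIntegral.integral_pos (by norm_num) (Polynomial.continuous _).continuousOn ?_ ?_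
  · intro x hx
    have : 0 ≤ 1 - x := by linarith [hx.2]
    simp only [eval_mul, eval_pow, eval_sub, eval_one, eval_X]
    exact mul_nonneg (pow_nonneg this _) (mul_self_nonneg _)
  · by_contra hcon
    push Not at hcon
    apply hp
    apply Polynomial.eq_zero_of_infinite_isRoot
    refine Set.Infinite.mono ?_ (Set.Ico_infinite (show (-1 : ℝ) < 1 by norm_num))
    intro x hx
    have h1 := hcon x ⟨hx.1, hx.2.le⟩
    simp only [eval_mul, eval_pow, eval_sub, eval_one, eval_X] at h1
    have h2 : 0 < (1 - x) ^ a := pow_pos (by linarith [hx.2]) _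
    show p.eval x = 0
    by_contra h3
    have := mul_pos h2 (mul_self_pos.mpr h3)
    linarith

lemma iterate_parts (n : ℕ) : ∀ (F q : ℝ[X]), (X - 1) ^ n ∣ F → (X + 1) ^ n ∣ F →
    q.natDegree < n → polyInt (derivative^[n] F * q) = 0 := by
  suffices h : ∀ (m : ℕ) (F q : ℝ[X]), (X - 1) ^ m ∣ F → (X + 1) ^ m ∣ F →
      q.natDegree < m → polyInt (derivative^[m] F * q) = 0 from h n
  intro m
  induction m with
  | zero => intro F q _ _ h; omega
  | succ m ih =>
    intro F q h1 h2 hq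
    rw [Function.iterate_succ_apply']
    have e1 : (derivative^[m] F).eval 1 = 0 := by
      have := pow_sub_dvd_iterate_derivative_of_pow_dvd m h1
      rw [Nat.add_sub_cancel_left, pow_one] at this
      obtain ⟨r, hr⟩ := this
      rw [hr]; simp
    have e2 : (derivative^[m] F).eval (-1) = 0 := by
      have := pow_sub_dvd_iterate_derivative_of_pow_dvd m h2
      rw [Nat.add_sub_cancel_left, pow_one] at this
      obtain ⟨r, hr⟩ := this
      rw [hr]; simp
    have key := polyInt_derivative (derivative^[m] F * q)
    rw [derivative_mul, polyInt_add] at key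
    simp only [eval_mul, e1, e2, zero_mul, sub_zero] at key
    have h0 : polyInt (derivative^[m] F * derivative q) = 0 := by
      by_cases hd : q.natDegree = 0
      · rw [derivative_of_natDegree_zero hd]; simp [polyInt]
      · exact ih F _ ((pow_dvd_pow _ (Nat.le_succ m)).trans h1)
          ((pow_dvd_pow _ (Nat.le_succ m)).trans h2)
          (by have := natDegree_derivative_lt hd; omega)
    linarith

lemma iteratedDeriv_poly (n : ℕ) (F : ℝ[X]) :
    iteratedDeriv n (fun t => F.eval t) = fun t => (derivative^[n] F).eval t := by
  induction n with
  | zero => simp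
  | succ n ih =>
    rw [iteratedDeriv_succ, ih, Function.iterate_succ_apply']
    funext t
    exact Polynomial.deriv _

lemma natDegree_le_of_derivative (Q : ℝ[X]) (n : ℕ) (h : (derivative Q).natDegree ≤ n) :
    Q.natDegree ≤ n + 1 := by
  by_contra hc
  push Not at hc
  have h1 : (derivative Q).coeff (Q.natDegree - 1) = 0 :=
    coeff_eq_zero_of_natDegree_lt (by omega)
  rw [coeff_derivative, Nat.sub_add_cancel (by omega)] at h1
  rcases mul_eq_zero.mp h1 with h2 | h2
  · have : Q = 0 := leadingCoeff_eq_zero.mp h2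
    subst this; simp at hc
  · have : (0 : ℝ) ≤ ((Q.natDegree - 1 : ℕ) : ℝ) := Nat.cast_nonneg _
    linarith

lemma iterate_derivative_ne (n : ℕ) (F : ℝ[X]) (hF : F ≠ 0) (h : n ≤ F.natDegree) :
    derivative^[n] F ≠ 0 := by
  intro h0
  have h1 : (derivative^[n] F).coeff (F.natDegree - n) = 0 := by rw [h0]; simp
  rw [coeff_iterate_derivative, Nat.sub_add_cancel h] at h1
  simp only [nsmul_eq_mul, mul_eq_zero, coeff_natDegree, leadingCoeff_eq_zero, hF, or_false,
    Nat.cast_eq_zero] at h1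
  rw [Nat.descFactorial_eq_zero_iff_lt] at h1
  omega

lemma exists_antideriv (P : ℝ[X]) : ∃ Q : ℝ[X], derivative Q = P ∧ Q.eval (-1) = 0 := by
  have h : ∃ Q : ℝ[X], derivative Q = P := by
    induction P using Polynomial.induction_on' with
    | add p q hp hq =>
      obtain ⟨a, rfl⟩ := hp
      obtain ⟨b, rfl⟩ := hq
      exact ⟨a + b, derivative_add⟩
    | monomial n a =>
      refine ⟨monomial (n + 1) (a / (n + 1)), ?_⟩
      rw [derivative_monomial]
      have : (n : ℝ) + 1 ≠ 0 := by positivity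
      simp [this]
  obtain ⟨Q, hQ⟩ := h
  exact ⟨Q - C (Q.eval (-1)), by simp [hQ], by simp⟩

lemma exists_jacobi (a n : ℕ) : ∃ P : ℝ[X], P.natDegree ≤ n ∧ P ≠ 0 ∧
    (∀ q : ℝ[X], q.natDegree < n → polyInt ((1 - X) ^ a * (P * q)) = 0) ∧
    ∀ x : ℝ, x ≠ 1 → jacobiP a n x = P.eval x := by
  set F : ℝ[X] := (1 - X) ^ a * (X ^ 2 - 1) ^ n with hFdef
  have hX : (1 - X : ℝ[X]) ≠ 0 := by
    intro h
    have := congrArg (eval 0) h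
    simp at this
  have hfac : F = (1 - X) ^ (a + n) * ((-1) ^ n * (X + 1) ^ n) := by
    rw [hFdef, pow_add, mul_assoc, ← mul_pow, ← mul_pow]
    congr 2; ring
  have hdeg1 : (1 - X : ℝ[X]).natDegree = 1 := by
    rw [show (1 - X : ℝ[X]) = -(X - C 1) by simp, natDegree_neg, natDegree_X_sub_C]
  have hdeg2 : (X ^ 2 - 1 : ℝ[X]).natDegree = 2 := by
    rw [show (X ^ 2 - 1 : ℝ[X]) = X ^ 2 - C 1 by simp, natDegree_X_pow_sub_C]
  have hX2 : (X ^ 2 - 1 : ℝ[X]) ≠ 0 := by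
    intro h; rw [h] at hdeg2; simp at hdeg2
  have hF0 : F ≠ 0 := mul_ne_zero (pow_ne_zero _ hX) (pow_ne_zero _ hX2)
  have hFd : F.natDegree = a + 2 * n := by
    rw [hFdef, natDegree_mul (pow_ne_zero _ hX) (pow_ne_zero _ hX2), natDegree_pow, natDegree_pow,
      hdeg1, hdeg2]; ring
  have hdvd : (1 - X) ^ a ∣ derivative^[n] F := by
    have := pow_sub_dvd_iterate_derivative_of_pow_dvd (p := F) (q := 1 - X) (n := a + n) n
      ⟨_, hfac⟩
    rwa [Nat.add_sub_cancel] at this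
  obtain ⟨R, hR⟩ := hdvd
  have hD0 : derivative^[n] F ≠ 0 := iterate_derivative_ne n F hF0 (by omega)
  have hR0 : R ≠ 0 := by
    rintro rfl; simp at hR; exact hD0 hR
  have hRd : R.natDegree ≤ n := by
    have h1 := natDegree_iterate_derivative F n
    rw [hR, natDegree_mul (pow_ne_zero _ hX) hR0, natDegree_pow, hdeg1, hFd] at h1
    omega
  set k : ℝ := 1 / (2 ^ n * (n.factorial : ℝ)) with hk
  have hk0 : k ≠ 0 := by rw [hk]; positivity
  refine ⟨C k * R, (natDegree_C_mul_le _ _).trans hRd, mul_ne_zero (by simpa using hk0) hR0, ?_, ?_⟩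
  · intro q hq
    rw [show (1 - X) ^ a * (C k * R * q) = C k * (derivative^[n] F * q) by rw [hR]; ring,
      polyInt_C_mul, iterate_parts n F q ?_ ?_ hq, mul_zero]
    · exact Dvd.intro_left ((1 - X) ^ a * (X + 1) ^ n) (by
        rw [hFdef, mul_assoc, ← mul_pow]; congr 2; ring)
    · exact Dvd.intro_left ((1 - X) ^ a * (X - 1) ^ n) (by
        rw [hFdef, mul_assoc, ← mul_pow]; congr 2; ring)
  · intro x hx
    unfold jacobiP
    have : (fun t : ℝ => (1 - t) ^ (a : ℝ) * (t ^ 2 - 1) ^ n) = fun t => F.eval t := by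
      funext t; simp [hFdef]
    rw [this, iteratedDeriv_poly, hR, Real.rpow_natCast]
    have : (1 - x) ^ a ≠ 0 := pow_ne_zero _ (sub_ne_zero.mpr hx.symm)
    simp only [eval_mul, eval_pow, eval_sub, eval_one, eval_X, eval_C, hk]
    field_simp

lemma jacobiPhat_eq (a n : ℕ) (P Q : ℝ[X]) (hP : ∀ x : ℝ, x ≠ 1 → jacobiP a n x = P.eval x)
    (hQ : derivative Q = P) (hQ1 : Q.eval (-1) = 0) (x : ℝ) :
    jacobiPhat a (n + 1) x = Q.eval x := by
  unfold jacobiPhat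
  rw [if_neg (Nat.succ_ne_zero n), Nat.add_sub_cancel]
  have : ∫ ξ in (-1 : ℝ)..x, jacobiP a n ξ = ∫ ξ in (-1 : ℝ)..x, P.eval ξ := by
    apply intervalIntegral.integral_congr_ae
    have : ∀ᵐ ξ : ℝ, ξ ≠ 1 := by
      simp [ae_iff]
    filter_upwards [this] with ξ h _ using hP ξ h
  rw [this, intervalIntegral.integral_eq_sub_of_hasDerivAt (f := fun t => Q.eval t), hQ1, sub_zero]
  · intro t _; rw [← hQ]; exact Q.hasDerivAt t
  · exact polyInt_intervalIntegrable _ _ _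

/-- The Legendre polynomials (Jacobi polynomials with `α = 0`). -/
noncomputable def legP (i : ℕ) : ℝ[X] := (exists_jacobi 0 i).choose

lemma legP_natDegree (i : ℕ) : (legP i).natDegree ≤ i := (exists_jacobi 0 i).choose_spec.1

lemma legP_ne (i : ℕ) : legP i ≠ 0 := (exists_jacobi 0 i).choose_spec.2.1

lemma legP_orth (i : ℕ) (q : ℝ[X]) (hq : q.natDegree < i) : polyInt (legP i * q) = 0 := by
  have := (exists_jacobi 0 i).choose_spec.2.2.1 q hq
  change polyInt ((1 - X) ^ 0 * (legP i * q)) = 0 at this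
  rwa [pow_zero, one_mul] at this

lemma legP_eval (i : ℕ) (x : ℝ) (hx : x ≠ 1) : jacobiP ((0 : ℕ) : ℝ) i x = (legP i).eval x :=
  (exists_jacobi 0 i).choose_spec.2.2.2 x hx

lemma legP_zero : legP 0 = 1 := by
  have h1 : legP 0 = C ((legP 0).coeff 0) := eq_C_of_natDegree_le_zero (legP_natDegree 0)
  have h2 := legP_eval 0 0 (by norm_num)
  rw [h1] at h2
  simp [jacobiP] at h2
  rw [h1, ← h2]; simp

lemma exists_weight_antideriv (r : ℝ[X]) (n : ℕ) (hr : r.natDegree < n) :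
    ∃ S : ℝ[X], S.natDegree < n ∧ derivative ((1 - X) ^ 3 * S) = -((1 - X) ^ 2 * r) := by
  have hdeg1 : (1 - X : ℝ[X]).natDegree = 1 := by
    rw [show (1 - X : ℝ[X]) = -(X - C 1) by simp, natDegree_neg, natDegree_X_sub_C]
  set s := r.comp (1 - X) with hs
  have hsd : s.natDegree < n := by rw [hs, natDegree_comp, hdeg1, mul_one]; exact hr
  have hrs : r = ∑ k ∈ Finset.range n, C (s.coeff k) * (1 - X) ^ k := by
    have h1 : r = s.comp (1 - X) := by
      rw [hs, comp_assoc]; simp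
    conv_lhs => rw [h1, s.as_sum_range' n hsd]
    simp [Polynomial.sum_comp, ← C_mul_X_pow_eq_monomial]
  refine ⟨∑ k ∈ Finset.range n, C (s.coeff k / (k + 3)) * (1 - X) ^ k, ?_, ?_⟩
  · have : (∑ k ∈ Finset.range n, C (s.coeff k / (k + 3)) * (1 - X) ^ k : ℝ[X]).natDegree
        ≤ n - 1 := by
      apply natDegree_sum_le_of_forall_le
      intro k hk
      refine (natDegree_C_mul_le _ _).trans ?_
      rw [natDegree_pow, hdeg1]
      have := Finset.mem_range.mp hk
      omega
    omega
  · conv_rhs => rw [hrs]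
    rw [Finset.mul_sum, Finset.mul_sum, derivative_sum, ← Finset.sum_neg_distrib]
    apply Finset.sum_congr rfl
    intro k _
    have e : (1 - X : ℝ[X]) ^ 3 * (C (s.coeff k / (k + 3)) * (1 - X) ^ k)
        = C (s.coeff k / (k + 3)) * (1 - X) ^ (k + 3) := by ring
    have hk : (k : ℝ) + 3 ≠ 0 := by positivity
    have e2 : C (s.coeff k) = C (s.coeff k / (k + 3)) * C ((k : ℝ) + 3) := by
      rw [← C_mul, div_mul_cancel₀ _ hk]
    rw [e, e2, derivative_C_mul, derivative_pow, Nat.add_succ_sub_one]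
    simp
    ring

/-- The polynomial factor in `y` of the normal traces. -/
lemma exists_W (i j : ℕ) : ∃ W : ℝ[X], W.natDegree ≤ j ∧ W ≠ 0 ∧
    (∀ q : ℝ[X], q.natDegree < j → polyInt ((1 - X) ^ (2 * i + 1) * (W * q)) = 0) ∧
    ∀ x y : ℝ, dot3 (phiAll i j (x, y, 0)) (0, 0, -1)
      = (1 - y) ^ i * (legP i).eval (x / (1 - y)) * W.eval (2 * y - 1) := by
  match i, j with
  | 0, 0 =>
    refine ⟨C (-1 / 2), by simp, ?_, fun q hq => by omega, ?_⟩
    · rw [Ne, C_eq_zero]; norm_num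
    · intro x y
      have hx1 : ∀ p : ℝ × ℝ × ℝ, grad3 lam1 p = (-1 / 2, -1 / 2, -1 / 2) := by
        intro p
        simp [grad3, pdx, pdy, pdz, lam1]
        try norm_num
      have hx2 : ∀ p : ℝ × ℝ × ℝ, grad3 lam2 p = (1 / 2, -1 / 2, -1 / 2) := by
        intro p
        simp [grad3, pdx, pdy, pdz, lam2]
        try norm_num
      have hx3 : ∀ p : ℝ × ℝ × ℝ, grad3 lam3 p = (0, 1, 0) := by
        intro p
        simp [grad3, pdx, pdy, pdz, lam3]
      simp [phiAll, hx1, hx2, hx3, dot3, cross3, legP_zero, lam1, lam2, lam3]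
      ring
  | 0, j + 1 =>
    obtain ⟨P, hPd, hP0, hPo, hPe⟩ := exists_jacobi 3 j
    obtain ⟨Q, hQ, hQ1⟩ := exists_antideriv P
    have hQe := jacobiPhat_eq 3 j P Q hPe hQ hQ1
    have hQd := natDegree_le_of_derivative Q j (hQ ▸ hPd)
    have hder : derivative (C (1 / 2) * ((1 - X) ^ 2 * Q))
        = -((1 - X) * (Q - C (1 / 2) * ((1 - X) * P))) := by
      have h2 : (C (1 / 2) * 2 : ℝ[X]) = 1 := by
        rw [show (2 : ℝ[X]) = C 2 from rfl, ← C_mul]; norm_num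
      rw [derivative_C_mul, derivative_mul, derivative_pow, hQ]
      simp only [derivative_sub, derivative_one, derivative_X]
      simp only [Nat.cast_ofNat, map_ofNat]
      linear_combination (-(1 - X) * Q) * h2
    refine ⟨Q - C (1 / 2) * ((1 - X) * P), ?_, ?_, ?_, ?_⟩
    · refine (natDegree_sub_le _ _).trans (max_le hQd ?_)
      refine (natDegree_C_mul_le _ _).trans (natDegree_mul_le.trans ?_)
      have : (1 - X : ℝ[X]).natDegree ≤ 1 := by
        rw [show (1 - X : ℝ[X]) = -(X - C 1) by simp, natDegree_neg, natDegree_X_sub_C]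
      omega
    · intro h0
      rw [h0, mul_zero, neg_zero] at hder
      have h1 := eq_C_of_natDegree_eq_zero (derivative_eq_zero.mp hder)
      set c := (C (1 / 2) * ((1 - X) ^ 2 * Q)).coeff 0
      have h2 := congrArg (eval 1) h1
      simp at h2
      rw [← h2, C_0] at h1
      have hX : (1 - X : ℝ[X]) ≠ 0 := by
        intro h
        have := congrArg (eval 0) h
        simp at this
      have h3 : Q = 0 := by
        rcases mul_eq_zero.mp h1 with h | h
        · rw [C_eq_zero] at h; norm_num at h
        · exact (mul_eq_zero.mp h).resolve_left (pow_ne_zero _ hX)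
      rw [h3] at hQ
      simp at hQ
      exact hP0 hQ.symm
    · intro q hq
      have k1 := polyInt_derivative (C (1 / 2) * ((1 - X) ^ 2 * Q) * q)
      rw [derivative_mul, hder, polyInt_add] at k1
      simp only [eval_mul, eval_pow, eval_sub, eval_one, eval_X, hQ1] at k1
      have k2 : polyInt (C (1 / 2) * ((1 - X) ^ 2 * Q) * derivative q) = 0 := by
        by_cases hd : q.natDegree = 0
        · rw [derivative_of_natDegree_zero hd]; simp [polyInt]
        · obtain ⟨S, hS, hS'⟩ := exists_weight_antideriv (derivative q) j
            (by have := natDegree_derivative_lt hd; omega)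
          have k3 := polyInt_derivative ((1 - X) ^ 3 * S * Q)
          rw [derivative_mul, hS', hQ, polyInt_add] at k3
          simp only [eval_mul, eval_pow, eval_sub, eval_one, eval_X, hQ1] at k3
          have k4 := hPo S hS
          rw [show (1 - X) ^ 3 * S * P = (1 - X) ^ 3 * (P * S) by ring, k4] at k3
          rw [show C (1 / 2) * ((1 - X) ^ 2 * Q) * derivative q
            = C (-1 / 2) * (-((1 - X) ^ 2 * derivative q) * Q) by
              rw [show (-1 / 2 : ℝ) = -(1 / 2) by norm_num, C_neg]; ring, polyInt_C_mul]
          norm_num at k3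
          rw [show -((1 - X) ^ 2 * derivative q) * Q = -((1 - X) ^ 2 * derivative q * Q) by ring,
            k3, mul_zero]
      rw [k2] at k1
      rw [show (1 - X) ^ (2 * 0 + 1) * ((Q - C (1 / 2) * ((1 - X) * P)) * q)
        = C (-1) * (-((1 - X) * (Q - C (1 / 2) * ((1 - X) * P))) * q) by
          rw [C_neg, C_1]; ring, polyInt_C_mul]
      have k5 : polyInt (-((1 - X) * (Q - C (1 / 2) * ((1 - X) * P))) * q) = 0 := by
        rw [add_zero] at k1
        rw [k1]; ring
      rw [k5, mul_zero]
    · intro x y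
      have hv : ∀ q : ℝ × ℝ × ℝ, vFun 2 (j + 1) q
          = Q.eval ((2 * q.2.1 + q.2.2 - 1) / (1 - q.2.2)) * (1 - q.2.2) ^ (j + 1) := by
        intro q
        unfold vFun
        rw [show (2 * ((2 : ℕ) : ℝ) - 1) = ((3 : ℕ) : ℝ) by norm_num, hQe]
      have d1 : HasDerivAt (fun t : ℝ => Q.eval (2 * y - 1) * (-t / 2))
          (Q.eval (2 * y - 1) * (-1 / 2)) x :=
        (((hasDerivAt_id x).neg).div_const 2).const_mul _
      have d2 : HasDerivAt (fun t : ℝ => Q.eval (2 * t - 1) * ((t - 1) / 2))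
          (P.eval (2 * y - 1) * (2 * 1) * ((y - 1) / 2) + Q.eval (2 * y - 1) * (1 / 2)) y := by
        rw [← hQ]
        exact (((Q.hasDerivAt (2 * y - 1)).comp y
          (((hasDerivAt_id y).const_mul 2).sub_const 1))).mul
          (((hasDerivAt_id y).sub_const 1).div_const 2)
      simp [phiAll, curl3, dot3, pdx, pdy, hv, nedelec0, legP_zero, -deriv_mul_const_field',
        -deriv_const_mul_field']
      rw [d1.deriv, d2.deriv]
      ring
  | i + 1, j =>
    obtain ⟨P, hPd, hP0, hPo, hPe⟩ := exists_jacobi (2 * (i + 1) + 1) j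
    obtain ⟨Q, hQ, hQ1⟩ := exists_antideriv P
    have hQe := jacobiPhat_eq _ j P Q hPe hQ hQ1
    obtain ⟨R, hR, hR1⟩ := exists_antideriv (legP (i + 1))
    have hRe := jacobiPhat_eq 0 (i + 1) _ R (legP_eval (i + 1)) hR hR1
    refine ⟨C 2 * P, (natDegree_C_mul_le _ _).trans hPd, mul_ne_zero ?_ hP0, ?_, ?_⟩
    · rw [Ne, C_eq_zero]; norm_num
    · intro q hq
      rw [mul_assoc, mul_left_comm, polyInt_C_mul, hPo q hq, mul_zero]
    · intro x y
      have hv : ∀ q : ℝ × ℝ × ℝ, vFun (i + 2) (j + 1) q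
          = Q.eval ((2 * q.2.1 + q.2.2 - 1) / (1 - q.2.2)) * (1 - q.2.2) ^ (j + 1) := by
        intro q
        unfold vFun
        rw [show (2 * ((i + 2 : ℕ) : ℝ) - 1) = ((2 * (i + 1) + 1 : ℕ) : ℝ) by push_cast; ring, hQe]
      have hu : ∀ q : ℝ × ℝ × ℝ, uFun (i + 2) q
          = R.eval (q.1 / (1 - q.2.1 - q.2.2)) * (1 - q.2.1 - q.2.2) ^ (i + 2) := by
        intro q
        unfold uFun
        rw [show (0 : ℝ) = ((0 : ℕ) : ℝ) by norm_num, hRe]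
      have d1 : HasDerivAt (fun t : ℝ => R.eval (t / (1 - y)) * (1 - y) ^ (i + 2))
          ((legP (i + 1)).eval (x / (1 - y)) * (1 / (1 - y)) * (1 - y) ^ (i + 2)) x := by
        rw [← hR]
        exact ((R.hasDerivAt (x / (1 - y))).comp x
          ((hasDerivAt_id x).div_const (1 - y))).mul_const _
      have d2 : HasDerivAt (fun t : ℝ => Q.eval (2 * t - 1)) (P.eval (2 * y - 1) * (2 * 1)) y := by
        rw [← hQ]
        exact (Q.hasDerivAt (2 * y - 1)).comp y (((hasDerivAt_id y).const_mul 2).sub_const 1)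
      simp [phiAll, cross3, grad3, dot3, pdx, pdy, hv, hu, -deriv_mul_const_field',
        -deriv_const_mul_field']
      rw [d1.deriv, d2.deriv]
      by_cases hy : 1 - y = 0
      · simp [hy]
      · field_simp
        ring

lemma face_measurable : MeasurableSet bottomFace := by
  have h1 : IsClosed {p : ℝ × ℝ | 0 ≤ p.2} := isClosed_le (by fun_prop) (by fun_prop)
  have h2 : IsClosed {p : ℝ × ℝ | p.2 ≤ 1} := isClosed_le (by fun_prop) (by fun_prop)
  have h3 : IsClosed {p : ℝ × ℝ | |p.1| ≤ 1 - p.2} := isClosed_le (by fun_prop) (by fun_prop)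
  exact (h1.inter (h2.inter h3)).measurableSet

lemma face_integrable (n : ℕ) (A V : ℝ[X]) :
    IntegrableOn (fun p : ℝ × ℝ =>
      (1 - p.2) ^ n * A.eval (p.1 / (1 - p.2)) * V.eval (2 * p.2 - 1)) bottomFace := by
  obtain ⟨a, ha⟩ := (isCompact_Icc (a := (-1 : ℝ)) (b := 1)).exists_bound_of_continuousOn
    A.continuous.continuousOn
  obtain ⟨v, hv⟩ := (isCompact_Icc (a := (-1 : ℝ)) (b := 1)).exists_bound_of_continuousOn
    V.continuous.continuousOn
  have hsub : bottomFace ⊆ Set.Icc ((-1 : ℝ), (0 : ℝ)) (1, 1) := by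
    rintro ⟨x, y⟩ ⟨h0, h1, h2⟩
    simp only at h0 h1 h2
    have := abs_le.mp h2
    exact ⟨⟨by simp only; linarith, h0⟩, ⟨by simp only; linarith, h1⟩⟩
  have hfin : volume bottomFace ≠ ⊤ :=
    ((measure_mono hsub).trans_lt isCompact_Icc.measure_lt_top).ne
  refine Measure.integrableOn_of_bounded (M := 1 * a * v) hfin ?_ ?_
  · apply Measurable.aestronglyMeasurable
    have hA := A.continuous.measurable
    have hV := V.continuous.measurable
    refine Measurable.mul (Measurable.mul (by fun_prop) ?_) ?_
    · exact hA.comp (by fun_prop)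
    · exact hV.comp (by fun_prop)
  · refine (ae_restrict_mem face_measurable).mono ?_
    rintro ⟨x, y⟩ ⟨h0, h1, h2⟩
    simp only at h0 h1 h2 ⊢
    have hx : x / (1 - y) ∈ Set.Icc (-1 : ℝ) 1 := by
      rw [Set.mem_Icc, ← abs_le, abs_div, abs_of_nonneg (sub_nonneg.mpr h1)]
      exact div_le_one_of_le₀ h2 (sub_nonneg.mpr h1)
    have hy : 2 * y - 1 ∈ Set.Icc (-1 : ℝ) 1 := ⟨by linarith, by linarith⟩
    have ha' := ha _ hx
    have hv' := hv _ hy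
    have ha0 : 0 ≤ a := (norm_nonneg _).trans ha'
    rw [norm_mul, norm_mul, norm_pow]
    have : ‖1 - y‖ ≤ 1 := by rw [Real.norm_eq_abs, abs_le]; constructor <;> linarith
    gcongr
    exact pow_le_one₀ (norm_nonneg _) this

lemma face_integral (n : ℕ) (A V : ℝ[X]) :
    ∫ p in bottomFace, (1 - p.2) ^ n * A.eval (p.1 / (1 - p.2)) * V.eval (2 * p.2 - 1)
      = (1 / 2) ^ (n + 2) * (polyInt A * polyInt ((1 - X) ^ (n + 1) * V)) := by
  have hint := (integrable_indicator_iff face_measurable).mpr (face_integrable n A V)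
  rw [← integral_indicator face_measurable]
  rw [Measure.volume_eq_prod] at hint ⊢
  rw [integral_prod_symm _ hint]
  have inner : ∀ y : ℝ, y ≠ 1 → (∫ x : ℝ, bottomFace.indicator (fun p : ℝ × ℝ =>
      (1 - p.2) ^ n * A.eval (p.1 / (1 - p.2)) * V.eval (2 * p.2 - 1)) (x, y))
      = (Set.Icc (0 : ℝ) 1).indicator
        (fun y => polyInt A * ((1 - y) ^ (n + 1) * V.eval (2 * y - 1))) y := by
    intro y hy1
    by_cases hy : y ∈ Set.Icc (0 : ℝ) 1
    · rw [Set.indicator_of_mem hy]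
      have hpos : 0 < 1 - y := sub_pos.mpr (lt_of_le_of_ne hy.2 hy1)
      have e : (fun x : ℝ => bottomFace.indicator (fun p : ℝ × ℝ =>
          (1 - p.2) ^ n * A.eval (p.1 / (1 - p.2)) * V.eval (2 * p.2 - 1)) (x, y))
          = (Set.Icc (-(1 - y)) (1 - y)).indicator (fun x : ℝ =>
            (1 - y) ^ n * A.eval (x / (1 - y)) * V.eval (2 * y - 1)) := by
        funext x
        by_cases hx : x ∈ Set.Icc (-(1 - y)) (1 - y)
        · rw [Set.indicator_of_mem hx, Set.indicator_of_mem]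
          exact ⟨hy.1, hy.2, abs_le.mpr hx⟩
        · rw [Set.indicator_of_notMem hx, Set.indicator_of_notMem]
          rintro ⟨_, _, h⟩
          exact hx (abs_le.mp h)
      rw [e, integral_indicator measurableSet_Icc, integral_Icc_eq_integral_Ioc,
        ← intervalIntegral.integral_of_le (by linarith), intervalIntegral.integral_mul_const,
        intervalIntegral.integral_const_mul,
        intervalIntegral.integral_comp_div (fun t => A.eval t) hpos.ne',
        neg_div, div_self hpos.ne', smul_eq_mul]
      unfold polyInt
      ring
    · rw [Set.indicator_of_notMem hy]
      have e : (fun x : ℝ => bottomFace.indicator (fun p : ℝ × ℝ =>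
          (1 - p.2) ^ n * A.eval (p.1 / (1 - p.2)) * V.eval (2 * p.2 - 1)) (x, y))
          = fun _ => 0 := by
        funext x
        rw [Set.indicator_of_notMem]
        rintro ⟨h1, h2, _⟩
        exact hy ⟨h1, h2⟩
      rw [e, integral_zero]
  have hae : ∀ᵐ y : ℝ, y ≠ 1 := by simp [ae_iff]
  rw [integral_congr_ae (hae.mono inner), integral_indicator measurableSet_Icc,
    integral_Icc_eq_integral_Ioc, ← intervalIntegral.integral_of_le zero_le_one,
    intervalIntegral.integral_const_mul]
  have hsub : ∫ y in (0 : ℝ)..1, (1 - y) ^ (n + 1) * V.eval (2 * y - 1)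
      = (1 / 2) ^ (n + 2) * polyInt ((1 - X) ^ (n + 1) * V) := by
    have h := intervalIntegral.integral_comp_mul_sub (a := 0) (b := 1)
      (fun t : ℝ => ((1 - X) ^ (n + 1) * V).eval t) (two_ne_zero (α := ℝ)) 1
    rw [show (2 : ℝ) * 0 - 1 = -1 by norm_num, show (2 : ℝ) * 1 - 1 = 1 by norm_num] at h
    change _ = _ • polyInt _ at h
    rw [smul_eq_mul] at h
    have h2 : ∀ y : ℝ, (1 - y) ^ (n + 1) * V.eval (2 * y - 1)
        = (1 / 2) ^ (n + 1) * ((1 - X) ^ (n + 1) * V).eval (2 * y - 1) := by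
      intro y
      simp only [eval_mul, eval_pow, eval_sub, eval_one, eval_X]
      rw [← mul_assoc, ← mul_pow]
      congr 2; ring
    simp_rw [h2]
    rw [intervalIntegral.integral_const_mul, h]
    ring
  rw [hsub]; ring

/-- The chosen `y`-factors. -/
noncomputable def facW (i j : ℕ) : ℝ[X] := (exists_W i j).choose

lemma facW_natDegree (i j : ℕ) : (facW i j).natDegree ≤ j := (exists_W i j).choose_spec.1

lemma facW_ne (i j : ℕ) : facW i j ≠ 0 := (exists_W i j).choose_spec.2.1

lemma facW_orth (i j : ℕ) (q : ℝ[X]) (hq : q.natDegree < j) :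
    polyInt ((1 - X) ^ (2 * i + 1) * (facW i j * q)) = 0 :=
  (exists_W i j).choose_spec.2.2.1 q hq

lemma facW_trace (i j : ℕ) (x y : ℝ) : dot3 (phiAll i j (x, y, 0)) (0, 0, -1)
    = (1 - y) ^ i * (legP i).eval (x / (1 - y)) * (facW i j).eval (2 * y - 1) :=
  (exists_W i j).choose_spec.2.2.2 x y

lemma trace_integral (i j l m : ℕ) :
    ∫ p in bottomFace, dot3 (phiAll i j (p.1, p.2, 0)) (0, 0, -1)
        * dot3 (phiAll l m (p.1, p.2, 0)) (0, 0, -1)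
      = (1 / 2) ^ (i + l + 2) * (polyInt (legP i * legP l)
        * polyInt ((1 - X) ^ (i + l + 1) * (facW i j * facW l m))) := by
  rw [← face_integral]
  congr 1
  funext p
  rw [facW_trace, facW_trace, eval_mul, eval_mul]
  ring

/-- The normal traces of the face basis functions on the bottom face of the
reference tetrahedron (with outer unit normal `n = (0,0,-1)`) form an
`L²(F)`-orthogonal family. -/
theorem face_normal_traces_orthogonal :
    ∃ c : ℕ → ℕ → ℝ, (∀ i j, 0 < c i j) ∧
      ∀ (k i j l m : ℕ), i + j ≤ k → l + m ≤ k →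
        ∫ p in bottomFace,
            dot3 (phiAll i j (p.1, p.2, 0)) (0, 0, -1)
              * dot3 (phiAll l m (p.1, p.2, 0)) (0, 0, -1)
          = c i j * (if i = l ∧ j = m then 1 else 0) := by
  refine ⟨fun i j => (1 / 2) ^ (i + i + 2) * (polyInt (legP i * legP i)
    * polyInt ((1 - X) ^ (i + i + 1) * (facW i j * facW i j))), ?_, ?_⟩
  · intro i j
    have h1 := polyInt_sq_pos 0 (legP i) (legP_ne i)
    rw [pow_zero, one_mul] at h1
    have h2 := polyInt_sq_pos (i + i + 1) (facW i j) (facW_ne i j)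
    positivity
  · intro k i j l m _ _
    rw [trace_integral]
    by_cases h : i = l ∧ j = m
    · obtain ⟨rfl, rfl⟩ := h
      simp
    · rw [if_neg h, mul_zero]
      rcases lt_trichotomy i l with hil | hil | hil
      · rw [mul_comm (legP i), legP_orth l _ ((legP_natDegree i).trans_lt hil)]
        ring
      · subst hil
        have hjm : j ≠ m := fun e => h ⟨rfl, e⟩
        rw [← two_mul i]
        rcases lt_or_gt_of_ne hjm with hj | hj
        · rw [mul_comm (facW i j), facW_orth i m _ ((facW_natDegree i j).trans_lt hj)]
          ring
        · rw [facW_orth i j _ ((facW_natDegree i m).trans_lt hj)]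
          ring
      · rw [legP_orth i _ ((legP_natDegree l).trans_lt hil)]
        ring
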